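/- arXiv:1311.1972 — 2 statements merged into one kernel-verified Lean document; each statement's English description precedes it below -/
import Mathlib

section
/- The diameter of the unit dyadic cube C₀ = [0,1)³ with respect to the gauge distance equals 13^(1/4); that is, sup{δ(x,y) : x, y ∈ C₀} = 13^(1/4). -/
/-!
The gauge distance is continuous, so the diameter of `C₀` is that of its closure `[0,1]³`. On a
closed box `[0,a] × [0,b] × [0,c]` the three coordinates of `x⁻¹ ∗ y` are at most `a`, `b` and
`c + 2ab` in absolute value, and `x = (a,0,0)`, `y = (0,b,c)` attain all three bounds at once.
-/

noncomputable section

open MeasureTheory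

/-- The underlying space of the Heisenberg group: `ℝ³`. -/
abbrev H3 : Type := ℝ × ℝ × ℝ

/-- The Heisenberg group law `(p,q,r)∗(p',q',r') = (p+p', q+q', r+r'+2(qp'−pq'))`. -/
def Hmul (x y : H3) : H3 :=
  (x.1 + y.1, x.2.1 + y.2.1, x.2.2 + y.2.2 + 2 * (x.2.1 * y.1 - x.1 * y.2.1))

/-- The inverse for the Heisenberg group law. -/
def Hinv (x : H3) : H3 := (-x.1, -x.2.1, -x.2.2)

/-- The homogeneous (gauge) norm `‖(p,q,r)‖ = ((p²+q²)²+r²)^(1/4)`. -/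
def Hnorm (x : H3) : ℝ := ((x.1 ^ 2 + x.2.1 ^ 2) ^ 2 + x.2.2 ^ 2) ^ ((1 : ℝ) / 4)

/-- The gauge distance `δ(x,y) = ‖x⁻¹∗y‖`. -/
def Hdist (x y : H3) : ℝ := Hnorm (Hmul (Hinv x) y)

/-- The gauge ball `B(x,r)`. -/
def Hball (x : H3) (r : ℝ) : Set H3 := {y | Hdist x y < r}

/-- The dilation `λ∘(p,q,r) = (λp, λq, λ²r)`. -/
def Hdil (l : ℝ) (x : H3) : H3 := (l * x.1, l * x.2.1, l ^ 2 * x.2.2)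

/-- A lattice point of `ℤ³` seen inside `ℝ³`. -/
def latticePt (k : ℤ × ℤ × ℤ) : H3 := ((k.1 : ℝ), (k.2.1 : ℝ), (k.2.2 : ℝ))

/-- The dyadic point `x_{j,k} = 2^{−j}∘k`. -/
def xjk (j : ℤ) (k : ℤ × ℤ × ℤ) : H3 := Hdil ((2 : ℝ) ^ (-j)) (latticePt k)

/-- The unit cube `C₀ = [0,1)³`. -/
def C0 : Set H3 :=
  {x : H3 | (0 ≤ x.1 ∧ x.1 < 1) ∧ (0 ≤ x.2.1 ∧ x.2.1 < 1) ∧ (0 ≤ x.2.2 ∧ x.2.2 < 1)}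

open Set

theorem isLUB_image2_of_isGreatest_image2_closure {α β γ : Type*} [TopologicalSpace α]
    [TopologicalSpace β] [TopologicalSpace γ] [Preorder γ] [ClosedIicTopology γ]
    {f : α → β → γ} {s : Set α} {t : Set β} {c : γ} (hf : Continuous (Function.uncurry f))
    (hc : IsGreatest (image2 f (closure s) (closure t)) c) : IsLUB (image2 f s t) c := by
  refine ⟨upperBounds_mono_set (image2_subset subset_closure subset_closure) hc.2, fun b hb => ?_⟩
  obtain ⟨x, hx, y, hy, rfl⟩ := hc.1
  have hxy : f x y ∈ closure (image2 f s t) :=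
    map_mem_closure₂ hf hx hy fun _ hx' _ hy' => mem_image2_of_mem hx' hy'
  rw [← upperBounds_closure] at hb
  exact hb hxy

theorem continuous_Hnorm : Continuous Hnorm :=
  Continuous.rpow_const (by fun_prop) fun _ => Or.inr (by norm_num)

theorem continuous_Hdist : Continuous (Function.uncurry Hdist) :=
  continuous_Hnorm.comp (by unfold Hmul Hinv; fun_prop)

theorem Hnorm_le_Hnorm {x y : H3} (h₁ : |x.1| ≤ |y.1|) (h₂ : |x.2.1| ≤ |y.2.1|)
    (h₃ : |x.2.2| ≤ |y.2.2|) : Hnorm x ≤ Hnorm y := by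
  rw [← sq_le_sq] at h₁ h₂ h₃
  unfold Hnorm
  gcongr

theorem Hmul_Hinv (x y : H3) :
    Hmul (Hinv x) y =
      (y.1 - x.1, y.2.1 - x.2.1, y.2.2 - x.2.2 + 2 * (x.1 * y.2.1 - x.2.1 * y.1)) := by
  ext <;> simp only [Hmul, Hinv] <;> ring

theorem abs_mul_sub_mul_le_of_mem_Icc {R : Type*} [CommRing R] [LinearOrder R]
    [IsOrderedRing R] {a b p p' q q' : R} (hp : p ∈ Icc 0 a) (hp' : p' ∈ Icc 0 a)
    (hq : q ∈ Icc 0 b) (hq' : q' ∈ Icc 0 b) : |p * q' - q * p'| ≤ a * b := by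
  have ha : 0 ≤ a := hp.1.trans hp.2
  rw [mul_comm q p']
  exact abs_sub_le_of_nonneg_of_le
    (mul_nonneg hp.1 hq'.1) (mul_le_mul hp.2 hq'.2 hq'.1 ha)
    (mul_nonneg hp'.1 hq.1) (mul_le_mul hp'.2 hq.2 hq.1 ha)

theorem Hdist_le_of_mem_Icc {b x y : H3} (hx : x ∈ Icc 0 b) (hy : y ∈ Icc 0 b) :
    Hdist x y ≤ Hnorm (b.1, b.2.1, b.2.2 + 2 * (b.1 * b.2.1)) := by
  obtain ⟨⟨hx₁, hx₂, hx₃⟩, hxb₁, hxb₂, hxb₃⟩ := hx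
  obtain ⟨⟨hy₁, hy₂, hy₃⟩, hyb₁, hyb₂, hyb₃⟩ := hy
  have h_area : |x.1 * y.2.1 - x.2.1 * y.1| ≤ b.1 * b.2.1 :=
    abs_mul_sub_mul_le_of_mem_Icc ⟨hx₁, hxb₁⟩ ⟨hy₁, hyb₁⟩ ⟨hx₂, hxb₂⟩ ⟨hy₂, hyb₂⟩
  have h_vert : |y.2.2 - x.2.2| ≤ b.2.2 := abs_sub_le_of_nonneg_of_le hy₃ hyb₃ hx₃ hxb₃
  rw [Hdist, Hmul_Hinv]
  refine Hnorm_le_Hnorm ?_ ?_ ?_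
  · exact (abs_sub_le_of_nonneg_of_le hy₁ hyb₁ hx₁ hxb₁).trans (le_abs_self _)
  · exact (abs_sub_le_of_nonneg_of_le hy₂ hyb₂ hx₂ hxb₂).trans (le_abs_self _)
  · calc |y.2.2 - x.2.2 + 2 * (x.1 * y.2.1 - x.2.1 * y.1)|
        ≤ |y.2.2 - x.2.2| + |2 * (x.1 * y.2.1 - x.2.1 * y.1)| := abs_add_le _ _
      _ = |y.2.2 - x.2.2| + 2 * |x.1 * y.2.1 - x.2.1 * y.1| := by rw [abs_mul, abs_two]
      _ ≤ b.2.2 + 2 * (b.1 * b.2.1) := by gcongr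
      _ ≤ |b.2.2 + 2 * (b.1 * b.2.1)| := le_abs_self _

theorem isGreatest_Hdist_Icc {b : H3} (hb : 0 ≤ b) :
    IsGreatest (image2 Hdist (Icc 0 b) (Icc 0 b))
      (Hnorm (b.1, b.2.1, b.2.2 + 2 * (b.1 * b.2.1))) := by
  obtain ⟨hb₁, hb₂, hb₃⟩ := hb
  refine ⟨⟨(b.1, 0, 0), ?_, (0, b.2.1, b.2.2), ?_, ?_⟩, ?_⟩
  · exact ⟨⟨hb₁, le_rfl, le_rfl⟩, le_rfl, hb₂, hb₃⟩
  · exact ⟨⟨le_rfl, hb₂, hb₃⟩, hb₁, le_rfl, le_rfl⟩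
  · simp [Hdist, Hmul_Hinv, Hnorm]
  · rintro _ ⟨x, hx, y, hy, rfl⟩
    exact Hdist_le_of_mem_Icc hx hy

theorem closure_C0 : closure C0 = Icc 0 1 := by
  have hC0 : C0 = Ico 0 1 ×ˢ Ico 0 1 ×ˢ Ico 0 1 := rfl
  simp only [hC0, closure_prod_eq, closure_Ico zero_ne_one, Icc_prod_Icc]
  rfl

theorem isLUB_Hdist_C0 : IsLUB (image2 Hdist C0 C0) ((13 : ℝ) ^ ((1 : ℝ) / 4)) := by
  have h_norm : Hnorm (1, 1, 1 + 2 * (1 * 1)) = (13 : ℝ) ^ ((1 : ℝ) / 4) := by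
    norm_num [Hnorm]
  refine isLUB_image2_of_isGreatest_image2_closure continuous_Hdist ?_
  rw [closure_C0, ← h_norm]
  exact isGreatest_Hdist_Icc zero_le_one

/-- The diameter of the unit cube `C₀ = [0,1)³` for the gauge distance is
`13^(1/4)`. -/
theorem heisenberg_diam_unit_cube :
    sSup {d : ℝ | ∃ x ∈ C0, ∃ y ∈ C0, d = Hdist x y} = (13 : ℝ) ^ ((1 : ℝ) / 4) := by
  have h_set : {d : ℝ | ∃ x ∈ C0, ∃ y ∈ C0, d = Hdist x y} = image2 Hdist C0 C0 := by
    simp only [image2, eq_comm]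
  rw [h_set]
  exact isLUB_Hdist_C0.csSup_eq isLUB_Hdist_C0.nonempty
end
end

section
/- For every k ∈ ℕ there exist constants C_k > 0 and γ₂ > 0 such that for every function f : ℝ³ → ℝ of class C^{k+1} and every x₀ ∈ ℝ³, there exists a polynomial P on ℝ³ of homogeneous degree deg_ℍ P ≤ k such that for all y ∈ ℝ³, |f(x₀∗y) − P(y)| ≤ C_k·‖y‖^{k+1}·sup{ |∇^α f(x₀∗z)| : α a word with weighted order |α| = k+1, z ∈ ℝ³ with ‖z‖ ≤ γ₂^{k+1}·‖y‖ }. -/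
noncomputable section

open MeasureTheory

/-- The left-invariant vector field `X = ∂/∂p + 2q ∂/∂r` acting on functions. -/
def XD (f : H3 → ℝ) (x : H3) : ℝ := fderiv ℝ f x (1, 0, 2 * x.2.1)

/-- The left-invariant vector field `Y = ∂/∂q − 2p ∂/∂r` acting on functions. -/
def YD (f : H3 → ℝ) (x : H3) : ℝ := fderiv ℝ f x (0, 1, -2 * x.1)

/-- The vector field `Z = ∂/∂r` acting on functions. -/
def ZD (f : H3 → ℝ) (x : H3) : ℝ := fderiv ℝ f x (0, 0, 1)

/-- The vector fields `V₁ = X`, `V₂ = Y`, `V₃ = Z` (indexed by `Fin 3`). -/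
def vecField (i : Fin 3) : (H3 → ℝ) → H3 → ℝ :=
  if i = 0 then XD else if i = 1 then YD else ZD

/-- The iterated derivative `∇^α f = V_{α₁}⋯V_{α_m} f` along a word `α`. -/
def wordDeriv : List (Fin 3) → (H3 → ℝ) → H3 → ℝ
  | [] => fun f => f
  | i :: t => fun f => vecField i (wordDeriv t f)

/-- The weighted order `|α| = Σᵢ ω(αᵢ)` of a word, with `ω(1)=ω(2)=1`, `ω(3)=2`. -/
def wordWeight (α : List (Fin 3)) : ℕ :=
  (α.map fun i => if i = (2 : Fin 3) then 2 else 1).sum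

/-- The coordinates of a point of `ℝ³` as a function `Fin 3 → ℝ`. -/
def coords (x : H3) : Fin 3 → ℝ := ![x.1, x.2.1, x.2.2]

/-- Evaluation of a polynomial on `ℝ³` at a point. -/
def evalP (P : MvPolynomial (Fin 3) ℝ) (x : H3) : ℝ := MvPolynomial.eval (coords x) P

/-- The Heisenberg weights of the coordinates `(p,q,r)`: `ω(p)=ω(q)=1`, `ω(r)=2`. -/
def wH : Fin 3 → ℕ := ![1, 1, 2]

/-- The homogeneous degree `deg_ℍ` of a polynomial on the Heisenberg group:
the monomial `p^a q^b r^c` has weight `a+b+2c`. -/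
def hdeg (P : MvPolynomial (Fin 3) ℝ) : ℕ := MvPolynomial.weightedTotalDegree wH P

/-!
Factor `y = (p, q, 0) ∗ (0, 0, r)`. Expanding `f` in `r` around `x₀ ∗ (p, q, 0)`, and then each
`Zʲ f` around `x₀` along the horizontal segment to `x₀ ∗ (p, q, 0)`, costs derivatives of weighted
order `k + 1` only, except at the end of the central expansion when `k` is even: one more `Z` would
produce order `k + 2`. There the increment of `Zʲ f`, `j = k / 2`, along the centre is instead
bounded by first order horizontal derivatives, a central element `(0, 0, r)` being a commutator of
two horizontal elements of norm `√|r| / 2`. By Cygan's triangle inequality for the gauge norm, all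
points visited lie in the ball of radius `3‖y‖` around `x₀`.
-/

/-! ### The gauge norm -/

theorem Hmul_assoc (x y z : H3) : Hmul (Hmul x y) z = Hmul x (Hmul y z) := by
  ext <;> simp only [Hmul] <;> ring

theorem Hmul_zero (x : H3) : Hmul x 0 = x := by simp [Hmul]

theorem Hnorm_nonneg (x : H3) : 0 ≤ Hnorm x := by unfold Hnorm; positivity

theorem Hnorm_sq (x : H3) : Hnorm x ^ 2 = ‖(⟨x.1 ^ 2 + x.2.1 ^ 2, x.2.2⟩ : ℂ)‖ := by
  rw [Complex.norm_eq_sqrt_sq_add_sq, Real.sqrt_eq_rpow, Hnorm, ← Real.rpow_natCast,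
    ← Real.rpow_mul (by positivity)]
  norm_num

theorem Hnorm_horizontal (p q : ℝ) : Hnorm (p, q, 0) = ‖(⟨p, q⟩ : ℂ)‖ := by
  refine (sq_eq_sq₀ (Hnorm_nonneg _) (norm_nonneg _)).1 ?_
  rw [Hnorm_sq, Complex.sq_norm, Complex.normSq_mk, Complex.norm_eq_sqrt_sq_add_sq]
  simp only [ne_eq, OfNat.ofNat_ne_zero, not_false_eq_true, zero_pow, add_zero]
  rw [Real.sqrt_sq (by positivity)]
  ring

theorem Hnorm_central (r : ℝ) : Hnorm (0, 0, r) = √|r| := by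
  refine (sq_eq_sq₀ (Hnorm_nonneg _) (Real.sqrt_nonneg _)).1 ?_
  rw [Hnorm_sq, Real.sq_sqrt (abs_nonneg r), Complex.norm_eq_sqrt_sq_add_sq]
  simp [Real.sqrt_sq_eq_abs]

theorem Hnorm_horizontal_le (x : H3) : Hnorm (x.1, x.2.1, 0) ≤ Hnorm x := by
  refine (sq_le_sq₀ (Hnorm_nonneg _) (Hnorm_nonneg _)).1 ?_
  rw [Hnorm_horizontal, Hnorm_sq, Complex.sq_norm, Complex.normSq_mk, ← sq, ← sq]
  exact Complex.re_le_norm ⟨x.1 ^ 2 + x.2.1 ^ 2, x.2.2⟩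

theorem abs_fst_le_Hnorm (x : H3) : |x.1| ≤ Hnorm x :=
  (Complex.abs_re_le_norm ⟨x.1, x.2.1⟩).trans (Hnorm_horizontal _ _ ▸ Hnorm_horizontal_le x)

theorem abs_snd_fst_le_Hnorm (x : H3) : |x.2.1| ≤ Hnorm x :=
  (Complex.abs_im_le_norm ⟨x.1, x.2.1⟩).trans (Hnorm_horizontal _ _ ▸ Hnorm_horizontal_le x)

theorem abs_snd_snd_le_Hnorm_sq (x : H3) : |x.2.2| ≤ Hnorm x ^ 2 :=
  Hnorm_sq x ▸ Complex.abs_im_le_norm ⟨x.1 ^ 2 + x.2.1 ^ 2, x.2.2⟩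

theorem sqrt_abs_snd_snd_le_Hnorm (x : H3) : √|x.2.2| ≤ Hnorm x :=
  Real.sqrt_le_iff.2 ⟨Hnorm_nonneg x, abs_snd_snd_le_Hnorm_sq x⟩

theorem Hnorm_Hmul_le (x y : H3) : Hnorm (Hmul x y) ≤ Hnorm x + Hnorm y := by
  -- Cygan's argument: for `z = p + iq` the group law reads
  -- `|z + w|² + ir'' = (|z|² + ir) + (|w|² + ir') + 2 z w̄`.
  have group_law : (⟨(Hmul x y).1 ^ 2 + (Hmul x y).2.1 ^ 2, (Hmul x y).2.2⟩ : ℂ) =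
      ⟨x.1 ^ 2 + x.2.1 ^ 2, x.2.2⟩ + ⟨y.1 ^ 2 + y.2.1 ^ 2, y.2.2⟩ +
        2 * (⟨x.1, x.2.1⟩ * starRingEnd ℂ ⟨y.1, y.2.1⟩) := by
    apply Complex.ext <;> simp [Hmul] <;> ring
  refine (sq_le_sq₀ (Hnorm_nonneg _) (add_nonneg (Hnorm_nonneg x) (Hnorm_nonneg y))).1 ?_
  calc Hnorm (Hmul x y) ^ 2
      ≤ Hnorm x ^ 2 + Hnorm y ^ 2 + 2 * (Hnorm (x.1, x.2.1, 0) * Hnorm (y.1, y.2.1, 0)) := by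
        rw [Hnorm_sq, group_law, Hnorm_sq, Hnorm_sq, Hnorm_horizontal, Hnorm_horizontal]
        refine norm_add₃_le.trans_eq ?_
        rw [norm_mul, norm_mul, Complex.norm_conj, Complex.norm_ofNat]
    _ ≤ Hnorm x ^ 2 + Hnorm y ^ 2 + 2 * (Hnorm x * Hnorm y) := by
        gcongr
        exacts [Hnorm_nonneg _, Hnorm_nonneg _, Hnorm_horizontal_le x, Hnorm_horizontal_le y]
    _ = (Hnorm x + Hnorm y) ^ 2 := by ring

theorem Hnorm_horizontal_smul_le {s : ℝ} (hs : s ∈ Set.Icc (0 : ℝ) 1) (p q : ℝ) :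
    Hnorm (s • (p, q, 0)) ≤ Hnorm (p, q, 0) := by
  have scaled : (⟨s * p, s * q⟩ : ℂ) = s * ⟨p, q⟩ := by apply Complex.ext <;> simp
  simp only [Prod.smul_mk, smul_eq_mul, mul_zero, Hnorm_horizontal]
  rw [scaled, norm_mul, Complex.norm_real, Real.norm_of_nonneg hs.1]
  exact mul_le_of_le_one_left (norm_nonneg _) hs.2

theorem Hnorm_horizontal_le_abs_add_abs (p q : ℝ) : Hnorm (p, q, 0) ≤ |p| + |q| :=
  Hnorm_horizontal p q ▸ Complex.norm_le_abs_re_add_abs_im ⟨p, q⟩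

theorem Hnorm_central_smul_le {s : ℝ} (hs : s ∈ Set.Icc (0 : ℝ) 1) (r : ℝ) :
    Hnorm (s • (0, 0, r)) ≤ √|r| := by
  simp only [Prod.smul_mk, smul_eq_mul, mul_zero, Hnorm_central, abs_mul, abs_of_nonneg hs.1]
  exact Real.sqrt_le_sqrt (mul_le_of_le_one_left (abs_nonneg r) hs.2)

theorem isCompact_setOf_Hnorm_le (R : ℝ) : IsCompact {z : H3 | Hnorm z ≤ R} := by
  have continuous_Hnorm : Continuous Hnorm :=
    Continuous.rpow_const (by fun_prop) fun _ => Or.inr (by norm_num)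
  refine (isCompact_Icc.prod (isCompact_Icc.prod isCompact_Icc)).of_isClosed_subset
    (isClosed_le continuous_Hnorm continuous_const)
    (fun z (hz : Hnorm z ≤ R) => (?_ : z ∈ Set.Icc (-R) R ×ˢ Set.Icc (-R) R ×ˢ
      Set.Icc (-R ^ 2) (R ^ 2)))
  exact ⟨abs_le.1 ((abs_fst_le_Hnorm z).trans hz), abs_le.1 ((abs_snd_fst_le_Hnorm z).trans hz),
    abs_le.1 ((abs_snd_snd_le_Hnorm_sq z).trans (pow_le_pow_left₀ (Hnorm_nonneg z) hz 2))⟩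

/-! ### Words of left-invariant derivatives -/

theorem contDiff_vecField {n : ℕ} {f : H3 → ℝ} (hf : ContDiff ℝ (n + 1) f) (i : Fin 3) :
    ContDiff ℝ n (vecField i f) := by
  have hf' : ContDiff ℝ n (fderiv ℝ f) := hf.fderiv_right le_rfl
  fin_cases i
  exacts [hf'.clm_apply (by fun_prop), hf'.clm_apply (by fun_prop), hf'.clm_apply (by fun_prop)]

theorem contDiff_wordDeriv (α : List (Fin 3)) {n : ℕ} {f : H3 → ℝ}
    (hf : ContDiff ℝ (n + α.length : ℕ) f) : ContDiff ℝ n (wordDeriv α f) := by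
  induction α generalizing n with
  | nil => exact hf
  | cons i α ih =>
    refine contDiff_vecField (ih (n := n + 1) ?_) i
    rwa [List.length_cons, ← add_assoc, add_right_comm] at hf

theorem wordDeriv_append (α β : List (Fin 3)) (f : H3 → ℝ) :
    wordDeriv (α ++ β) f = wordDeriv α (wordDeriv β f) := by
  induction α with
  | nil => rfl
  | cons i α ih => simp only [List.cons_append, wordDeriv, ih]

theorem wordDeriv_replicate (j : ℕ) (i : Fin 3) (f : H3 → ℝ) :
    wordDeriv (List.replicate j i) f = (vecField i)^[j] f := by
  induction j with
  | zero => rfl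
  | succ j ih =>
    rw [Function.iterate_succ_apply', ← ih]
    rfl

theorem wordWeight_append (α β : List (Fin 3)) :
    wordWeight (α ++ β) = wordWeight α + wordWeight β := by
  simp [wordWeight]

theorem wordWeight_replicate_two (j : ℕ) : wordWeight (List.replicate j 2) = 2 * j := by
  simp [wordWeight, mul_comm]

theorem length_le_wordWeight (α : List (Fin 3)) : α.length ≤ wordWeight α := by
  induction α with
  | nil => exact le_rfl
  | cons i α ih =>
    simp only [wordWeight, List.map_cons, List.sum_cons, List.length_cons] at *
    split_ifs <;> omega

theorem finite_setOf_wordWeight_eq (n : ℕ) : {α : List (Fin 3) | wordWeight α = n}.Finite :=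
  (List.finite_length_le (Fin 3) n).subset fun α (hα : wordWeight α = n) =>
    hα ▸ length_le_wordWeight α

theorem contDiff_iterate_ZD {n j : ℕ} {f : H3 → ℝ} (hf : ContDiff ℝ (n + j : ℕ) f) :
    ContDiff ℝ n (ZD^[j] f) := by
  have := contDiff_wordDeriv (List.replicate j 2) (f := f) (n := n) (by simpa using hf)
  rwa [wordDeriv_replicate] at this

theorem hasDerivAt_comp_Hmul_smul {h : H3 → ℝ} (hh : Differentiable ℝ h) (x v : H3) (s : ℝ) :
    HasDerivAt (fun s : ℝ => h (Hmul x (s • v)))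
      (v.1 * XD h (Hmul x (s • v)) + v.2.1 * YD h (Hmul x (s • v)) +
        v.2.2 * ZD h (Hmul x (s • v))) s := by
  set w : H3 := (v.1, v.2.1, v.2.2 + 2 * (x.2.1 * v.1 - x.1 * v.2.1)) with hw
  have line : (fun s : ℝ => Hmul x (s • v)) = fun s => x + s • w := by
    funext s
    ext <;> simp only [Hmul, hw, Prod.smul_fst, Prod.smul_snd, Prod.fst_add, Prod.snd_add,
      smul_eq_mul]
    ring
  have velocity : w = v.1 • (1, 0, 2 * (Hmul x (s • v)).2.1) +
      v.2.1 • (0, 1, -2 * (Hmul x (s • v)).1) + v.2.2 • ((0, 0, 1) : H3) := by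
    ext <;> simp only [Hmul, hw, Prod.smul_fst, Prod.smul_snd, Prod.fst_add, Prod.snd_add,
      smul_eq_mul] <;> ring
  have hline : HasDerivAt (fun s : ℝ => Hmul x (s • v)) w s := by
    rw [line]
    simpa using ((hasDerivAt_id s).smul_const w).const_add x
  refine ((hh _).hasFDerivAt.comp_hasDerivAt s hline).congr_deriv ?_
  conv_lhs => rw [velocity]
  simp only [map_add, map_smul, smul_eq_mul, XD, YD, ZD]

/-- Every derivative of `f` of weighted order `n` is bounded by `M` on the closed gauge ball
`{x ∗ z : ‖z‖ ≤ R}`. -/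
def DerivBoundOn (n : ℕ) (f : H3 → ℝ) (x : H3) (R M : ℝ) : Prop :=
  ∀ α, wordWeight α = n → ∀ z, Hnorm z ≤ R → |wordDeriv α f (Hmul x z)| ≤ M

namespace DerivBoundOn

variable {n : ℕ} {f : H3 → ℝ} {x : H3} {R M : ℝ}

theorem nonneg (hf : DerivBoundOn n f x R M) (hR : 0 ≤ R) : 0 ≤ M :=
  (abs_nonneg _).trans
    (hf (List.replicate n 0) (by simp [wordWeight]) 0 (by simpa [Hnorm] using hR))

theorem mono {R' : ℝ} (hf : DerivBoundOn n f x R M) (hR : R' ≤ R) : DerivBoundOn n f x R' M :=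
  fun α hα z hz => hf α hα z (hz.trans hR)

theorem recenter {z : H3} (hf : DerivBoundOn n f x (Hnorm z + R) M) :
    DerivBoundOn n f (Hmul x z) R M := fun α hα w hw => by
  rw [Hmul_assoc]
  exact hf α hα _ ((Hnorm_Hmul_le z w).trans (by gcongr))

protected theorem wordDeriv (β : List (Fin 3)) (hf : DerivBoundOn (n + wordWeight β) f x R M) :
    DerivBoundOn n (wordDeriv β f) x R M := fun α hα z hz => by
  rw [← wordDeriv_append]
  exact hf _ (by rw [wordWeight_append, hα]) z hz

theorem iterate_ZD {j : ℕ} (hf : DerivBoundOn (n + 2 * j) f x R M) :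
    DerivBoundOn n (ZD^[j] f) x R M := by
  rw [← wordWeight_replicate_two] at hf
  have := hf.wordDeriv
  rwa [wordDeriv_replicate] at this

end DerivBoundOn

theorem derivBoundOn_sSup {n : ℕ} {f : H3 → ℝ} (hf : ContDiff ℝ n f) (x : H3) (R : ℝ) :
    DerivBoundOn n f x R (sSup {v : ℝ | ∃ (α : List (Fin 3)) (z : H3),
      wordWeight α = n ∧ Hnorm z ≤ R ∧ v = |wordDeriv α f (Hmul x z)|}) := by
  have bounded : BddAbove (⋃ α ∈ {α : List (Fin 3) | wordWeight α = n},
      (fun z => |wordDeriv α f (Hmul x z)|) '' {z | Hnorm z ≤ R}) := by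
    refine (finite_setOf_wordWeight_eq n).bddAbove_biUnion.2 fun α (hα : wordWeight α = n) => ?_
    have hα' : ContDiff ℝ (0 : ℕ) (wordDeriv α f) := contDiff_wordDeriv α
      (hf.of_le (by rw [zero_add]; exact_mod_cast hα ▸ length_le_wordWeight α))
    have hx : Continuous (Hmul x) := by unfold Hmul; fun_prop
    exact (isCompact_setOf_Hnorm_le R).bddAbove_image (hα'.continuous.comp hx).abs.continuousOn
  intro α hα z hz
  refine le_csSup (bounded.mono ?_) ⟨α, z, hα, hz, rfl⟩
  rintro _ ⟨β, w, hβ, hw, rfl⟩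
  exact Set.mem_biUnion (x := β) hβ ⟨w, hw, rfl⟩

/-! ### Taylor's formula in one variable -/

theorem hasDerivAt_pow_succ_div_factorial (n : ℕ) (t : ℝ) :
    HasDerivAt (fun t : ℝ => t ^ (n + 1) / ((n + 1).factorial : ℝ))
      (t ^ n / (n.factorial : ℝ)) t := by
  refine ((hasDerivAt_pow (n + 1) t).div_const _).congr_deriv ?_
  rw [Nat.factorial_succ, Nat.cast_mul, add_tsub_cancel_right]
  exact mul_div_mul_left _ _ (Nat.cast_ne_zero.2 n.succ_ne_zero)

theorem norm_sub_taylor_sum_le {E : Type*} [NormedAddCommGroup E] [NormedSpace ℝ E] {T M : ℝ}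
    (n : ℕ) (φ : ℕ → ℝ → E) (c : E)
    (hφ : ∀ i < n, ∀ t ∈ Set.Icc 0 T, HasDerivAt (φ i) (φ (i + 1) t) t)
    (hM : ∀ t ∈ Set.Icc 0 T, ‖φ n t - c‖ ≤ M) {t : ℝ} (ht : t ∈ Set.Icc 0 T) :
    ‖φ 0 t - ∑ i ∈ Finset.range n, (t ^ i / (i.factorial : ℝ)) • φ i 0 -
      (t ^ n / (n.factorial : ℝ)) • c‖ ≤ M * (t ^ n / (n.factorial : ℝ)) := by
  induction n generalizing φ t with
  | zero => simpa using hM t ht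
  | succ n ih =>
    set F : ℝ → E := fun s =>
      φ 0 s - ∑ i ∈ Finset.range (n + 1), (s ^ i / (i.factorial : ℝ)) • φ i 0 -
        (s ^ (n + 1) / ((n + 1).factorial : ℝ)) • c
    have hF : ∀ s ∈ Set.Icc 0 T, HasDerivAt F
        (φ 1 s - ∑ i ∈ Finset.range n, (s ^ i / (i.factorial : ℝ)) • φ (i + 1) 0 -
          (s ^ n / (n.factorial : ℝ)) • c) s := fun s hs => by
      simp only [F, Finset.sum_range_succ', pow_zero, ← sub_sub]
      exact (((hφ 0 n.succ_pos s hs).sub (HasDerivAt.fun_sum fun i _ =>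
        (hasDerivAt_pow_succ_div_factorial i s).smul_const _)).sub_const _).sub
          ((hasDerivAt_pow_succ_div_factorial n s).smul_const c)
    have F_zero : F 0 = 0 := by simp [F, Finset.sum_range_succ']
    exact image_norm_le_of_norm_deriv_right_le_deriv_boundary
      (fun s hs => (hF s hs).continuousAt.continuousWithinAt)
      (fun s hs => (hF s (Set.Ico_subset_Icc_self hs)).hasDerivWithinAt)
      (by simp [F_zero]) (fun s => (hasDerivAt_pow_succ_div_factorial n s).const_mul M)
      (fun s hs => ih (fun i => φ (i + 1)) (fun i hi => hφ (i + 1) (Nat.succ_lt_succ hi)) hM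
        (Set.Ico_subset_Icc_self hs)) ht

theorem norm_one_sub_taylor_sum_le {E : Type*} [NormedAddCommGroup E] [NormedSpace ℝ E] {M : ℝ}
    (n : ℕ) (φ : ℕ → ℝ → E) (c : E)
    (hφ : ∀ i < n, ∀ t ∈ Set.Icc (0 : ℝ) 1, HasDerivAt (φ i) (φ (i + 1) t) t)
    (hM : ∀ t ∈ Set.Icc (0 : ℝ) 1, ‖φ n t - c‖ ≤ M) :
    ‖φ 0 1 - ∑ i ∈ Finset.range n, (1 / (i.factorial : ℝ)) • φ i 0 -
      (1 / (n.factorial : ℝ)) • c‖ ≤ M := by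
  have hM₀ : 0 ≤ M := (norm_nonneg _).trans (hM 0 (Set.left_mem_Icc.2 zero_le_one))
  have taylor := norm_sub_taylor_sum_le n φ c hφ hM (Set.right_mem_Icc.2 zero_le_one)
  simp only [one_pow] at taylor
  refine taylor.trans (mul_le_of_le_one_right hM₀ ?_)
  exact (div_le_one (by positivity)).2 (by exact_mod_cast n.factorial_pos)

/-! ### Taylor expansion along horizontal directions -/

/-- The polynomial `(p, q, r) ↦ ((pX + qY)ⁱ h)(x)`. The power is expanded into words, so that
homogeneity of degree `i` in `(p, q)` is visible without using linearity of `X` and `Y`. -/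
def horizontalForm : ℕ → (H3 → ℝ) → H3 → MvPolynomial (Fin 3) ℝ
  | 0, h, x => MvPolynomial.C (h x)
  | i + 1, h, x =>
    MvPolynomial.X 0 * horizontalForm i (XD h) x + MvPolynomial.X 1 * horizontalForm i (YD h) x

theorem evalP_horizontalForm_zero (h : H3 → ℝ) (x y : H3) :
    evalP (horizontalForm 0 h x) y = h x := by
  simp [evalP, horizontalForm]

theorem evalP_horizontalForm_succ (i : ℕ) (h : H3 → ℝ) (x y : H3) :
    evalP (horizontalForm (i + 1) h x) y =
      y.1 * evalP (horizontalForm i (XD h) x) y + y.2.1 * evalP (horizontalForm i (YD h) x) y := by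
  simp [evalP, horizontalForm, coords]

theorem isWeightedHomogeneous_horizontalForm (i : ℕ) (h : H3 → ℝ) (x : H3) :
    (horizontalForm i h x).IsWeightedHomogeneous wH i := by
  induction i generalizing h with
  | zero => exact MvPolynomial.isWeightedHomogeneous_C _ _
  | succ i ih =>
    rw [horizontalForm, add_comm i]
    exact ((MvPolynomial.isWeightedHomogeneous_X ℝ wH 0).mul (ih (XD h))).add
      ((MvPolynomial.isWeightedHomogeneous_X ℝ wH 1).mul (ih (YD h)))

theorem DerivBoundOn.abs_evalP_horizontalForm_le {n : ℕ} {h : H3 → ℝ} {x : H3} {R M : ℝ}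
    (hM : DerivBoundOn n h x R M) {z : H3} (hz : Hnorm z ≤ R) (y : H3) :
    |evalP (horizontalForm n h (Hmul x z)) y| ≤ (|y.1| + |y.2.1|) ^ n * M := by
  induction n generalizing h with
  | zero => simpa [evalP_horizontalForm_zero] using! hM [] rfl z hz
  | succ n ih =>
    rw [evalP_horizontalForm_succ]
    calc |y.1 * _ + y.2.1 * _|
        ≤ |y.1| * ((|y.1| + |y.2.1|) ^ n * M) + |y.2.1| * ((|y.1| + |y.2.1|) ^ n * M) := by
          refine (abs_add_le _ _).trans ?_
          rw [abs_mul, abs_mul]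
          gcongr
          exacts [ih (DerivBoundOn.wordDeriv [0] hM), ih (DerivBoundOn.wordDeriv [1] hM)]
      _ = (|y.1| + |y.2.1|) ^ (n + 1) * M := by ring

theorem hasDerivAt_evalP_horizontalForm {i : ℕ} {h : H3 → ℝ} (hh : ContDiff ℝ (i + 1 : ℕ) h)
    (x y : H3) (s : ℝ) :
    HasDerivAt (fun s : ℝ => evalP (horizontalForm i h (Hmul x (s • (y.1, y.2.1, 0)))) y)
      (evalP (horizontalForm (i + 1) h (Hmul x (s • (y.1, y.2.1, 0)))) y) s := by
  induction i generalizing h with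
  | zero =>
    simpa [evalP_horizontalForm_succ, evalP_horizontalForm_zero] using
      hasDerivAt_comp_Hmul_smul (hh.differentiable (by simp)) x (y.1, y.2.1, 0) s
  | succ i ih =>
    have hX := ih (h := XD h) (contDiff_vecField hh 0)
    have hY := ih (h := YD h) (contDiff_vecField hh 1)
    simp only [evalP_horizontalForm_succ _ h]
    exact (hX.const_mul y.1).add (hY.const_mul y.2.1)

/-- The Taylor polynomial of `h` at `x` of degree less than `n` along the horizontal directions. -/
def horizontalTaylor (n : ℕ) (h : H3 → ℝ) (x : H3) : MvPolynomial (Fin 3) ℝ :=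
  ∑ i ∈ Finset.range n, MvPolynomial.C (1 / (i.factorial : ℝ)) * horizontalForm i h x

theorem evalP_horizontalTaylor (n : ℕ) (h : H3 → ℝ) (x y : H3) :
    evalP (horizontalTaylor n h x) y =
      ∑ i ∈ Finset.range n, 1 / (i.factorial : ℝ) * evalP (horizontalForm i h x) y := by
  simp [evalP, horizontalTaylor]

theorem abs_sub_evalP_horizontalTaylor_le {n : ℕ} {h : H3 → ℝ} (hh : ContDiff ℝ n h) {x : H3}
    {R M : ℝ} (y : H3) (hy : Hnorm (y.1, y.2.1, 0) ≤ R) (hM : DerivBoundOn n h x R M) :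
    |h (Hmul x (y.1, y.2.1, 0)) - evalP (horizontalTaylor n h x) y| ≤
      (|y.1| + |y.2.1|) ^ n * M := by
  have taylor := norm_one_sub_taylor_sum_le n
    (fun i s => evalP (horizontalForm i h (Hmul x (s • (y.1, y.2.1, 0)))) y) 0
    (fun i hi s _ => hasDerivAt_evalP_horizontalForm (hh.of_le (by exact_mod_cast hi)) x y s)
    (fun s hs => by
      rw [sub_zero]
      exact hM.abs_evalP_horizontalForm_le ((Hnorm_horizontal_smul_le hs _ _).trans hy) y)
  simpa only [evalP_horizontalTaylor, evalP_horizontalForm_zero, one_smul, zero_smul, Hmul_zero,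
    smul_zero, sub_zero, smul_eq_mul, mul_zero, Real.norm_eq_abs] using taylor

/-! ### Increments along the centre -/

theorem abs_foldl_Hmul_horizontal_sub_le {h : H3 → ℝ} (hh : ContDiff ℝ 1 h) {M : ℝ}
    (L : List (ℝ × ℝ)) (x : H3)
    (hM : DerivBoundOn 1 h x (L.map fun v => |v.1| + |v.2|).sum M) :
    |h (L.foldl (fun z v => Hmul z (v.1, v.2, 0)) x) - h x| ≤
      (L.map fun v => |v.1| + |v.2|).sum * M := by
  induction L generalizing x with
  | nil => simp
  | cons v L ih =>
    rw [List.map_cons, List.sum_cons] at hM ⊢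
    have hv := Hnorm_horizontal_le_abs_add_abs v.1 v.2
    have hL : 0 ≤ (L.map fun v => |v.1| + |v.2|).sum :=
      List.sum_nonneg fun _ hu => by
        obtain ⟨u, -, rfl⟩ := List.mem_map.1 hu
        positivity
    have first := abs_sub_evalP_horizontalTaylor_le (n := 1) (by exact_mod_cast hh) (v.1, v.2, 0)
      (hv.trans (le_add_of_nonneg_right hL)) hM
    have rest := ih (Hmul x (v.1, v.2, 0)) (hM.mono (by gcongr)).recenter
    simp only [evalP_horizontalTaylor, Finset.sum_range_one, evalP_horizontalForm_zero,
      Nat.factorial_zero, Nat.cast_one, div_one, one_mul, pow_one] at first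
    calc _ ≤ _ := abs_sub_le _ (h (Hmul x (v.1, v.2, 0))) _
      _ ≤ _ := add_le_add rest first
      _ = _ := by ring

theorem exists_eq_neg_four_mul (r : ℝ) :
    ∃ a b : ℝ, |a| = √|r| / 2 ∧ |b| = √|r| / 2 ∧ -4 * (a * b) = r := by
  have hr := Real.mul_self_sqrt (abs_nonneg r)
  have hr' : |√|r| / 2| = √|r| / 2 := abs_of_nonneg (by positivity)
  rcases abs_cases r with ⟨habs, -⟩ | ⟨habs, -⟩
  · exact ⟨√|r| / 2, -(√|r| / 2), hr', by rwa [abs_neg], by linarith⟩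
  · exact ⟨√|r| / 2, √|r| / 2, hr', hr', by linarith⟩

theorem abs_Hmul_central_sub_le_sqrt {h : H3 → ℝ} (hh : ContDiff ℝ 1 h) {x : H3} {M : ℝ} (r : ℝ)
    (hM : DerivBoundOn 1 h x (2 * √|r|) M) :
    |h (Hmul x (0, 0, r)) - h x| ≤ 2 * √|r| * M := by
  obtain ⟨a, b, ha, hb, rfl⟩ := exists_eq_neg_four_mul r
  -- The central element is the commutator of `(a, 0, 0)` and `(0, b, 0)`.
  set L : List (ℝ × ℝ) := [(a, 0), (0, b), (-a, 0), (0, -b)]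
  have endpoint : L.foldl (fun z v => Hmul z (v.1, v.2, 0)) x = Hmul x (0, 0, -4 * (a * b)) := by
    ext <;> simp only [L, Hmul, List.foldl_cons, List.foldl_nil] <;> ring
  have length : (L.map fun v => |v.1| + |v.2|).sum = 2 * √|(-4 * (a * b))| := by
    simp only [L, List.map_cons, List.map_nil, List.sum_cons, List.sum_nil, abs_neg, abs_zero,
      ha, hb]
    ring
  have := abs_foldl_Hmul_horizontal_sub_le hh L x (length ▸ hM)
  rwa [endpoint, length] at this

theorem hasDerivAt_comp_Hmul_central {h : H3 → ℝ} (hh : Differentiable ℝ h) (x : H3) (r s : ℝ) :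
    HasDerivAt (fun s : ℝ => h (Hmul x (s • (0, 0, r)))) (r * ZD h (Hmul x (s • (0, 0, r)))) s := by
  simpa using hasDerivAt_comp_Hmul_smul hh x (0, 0, r) s

theorem abs_Hmul_central_sub_le {h : H3 → ℝ} (hh : Differentiable ℝ h) {x : H3} {M : ℝ} (r : ℝ)
    (hM : DerivBoundOn 2 h x √|r| M) : |h (Hmul x (0, 0, r)) - h x| ≤ |r| * M := by
  have mean_value := norm_image_sub_le_of_norm_deriv_le_segment_01'
    (fun s _ => (hasDerivAt_comp_Hmul_central hh x r s).hasDerivWithinAt)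
    (C := |r| * M) (fun s hs => by
      rw [norm_mul, Real.norm_eq_abs]
      exact mul_le_mul_of_nonneg_left
        (hM [2] rfl _ (Hnorm_central_smul_le (Set.Ico_subset_Icc_self hs) r)) (abs_nonneg r))
  simpa [Hmul_zero] using mean_value

theorem abs_Hmul_central_sub_le_pow {n : ℕ} (hn : n = 1 ∨ n = 2) {h : H3 → ℝ}
    (hh : ContDiff ℝ 1 h) {x : H3} {M : ℝ} (r : ℝ) (hM : DerivBoundOn n h x (2 * √|r|) M) :
    |h (Hmul x (0, 0, r)) - h x| ≤ 2 * √|r| ^ n * M := by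
  have hr := Real.sqrt_nonneg |r|
  rcases hn with rfl | rfl
  · simpa using abs_Hmul_central_sub_le_sqrt hh r hM
  · have hM' : 0 ≤ M := hM.nonneg (by positivity)
    refine (abs_Hmul_central_sub_le (hh.differentiable one_ne_zero) r
      (hM.mono (by linarith))).trans ?_
    rw [Real.sq_sqrt (abs_nonneg r)]
    nlinarith [mul_nonneg (abs_nonneg r) hM']

theorem hasDerivAt_pow_mul_iterate_ZD {j : ℕ} {f : H3 → ℝ} (hf : ContDiff ℝ (j + 1 : ℕ) f)
    (x : H3) (r s : ℝ) :
    HasDerivAt (fun s : ℝ => r ^ j * (ZD^[j] f) (Hmul x (s • (0, 0, r))))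
      (r ^ (j + 1) * (ZD^[j + 1] f) (Hmul x (s • (0, 0, r)))) s := by
  have hj : ContDiff ℝ (1 : ℕ) (ZD^[j] f) := contDiff_iterate_ZD (by rwa [add_comm])
  refine ((hasDerivAt_comp_Hmul_central (hj.differentiable (by simp)) x r s).const_mul
    (r ^ j)).congr_deriv ?_
  rw [Function.iterate_succ_apply']
  ring

theorem abs_pow_mul_iterate_ZD_sub_le {m n : ℕ} (hn : n = 1 ∨ n = 2) {f : H3 → ℝ}
    (hf : ContDiff ℝ (m + 1 : ℕ) f) {x : H3} {M : ℝ} (r : ℝ)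
    (hM : DerivBoundOn (n + 2 * m) f x (2 * √|r|) M) {s : ℝ} (hs : s ∈ Set.Icc (0 : ℝ) 1) :
    |r ^ m * (ZD^[m] f) (Hmul x (s • (0, 0, r))) - r ^ m * (ZD^[m] f) x| ≤
      2 * √|r| ^ (n + 2 * m) * M := by
  have hM₀ : 0 ≤ M := hM.nonneg (by positivity)
  have hZ : ContDiff ℝ (1 : ℕ) (ZD^[m] f) := contDiff_iterate_ZD (by rwa [add_comm])
  have hsr : √|s * r| ≤ √|r| := by
    simpa only [Prod.smul_mk, smul_eq_mul, mul_zero, Hnorm_central] using Hnorm_central_smul_le hs r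
  have increment := abs_Hmul_central_sub_le_pow hn (by exact_mod_cast hZ) (s * r)
    (hM.iterate_ZD.mono (mul_le_mul_of_nonneg_left hsr zero_le_two))
  simp only [Prod.smul_mk, smul_eq_mul, mul_zero]
  rw [← mul_sub, abs_mul, abs_pow]
  calc |r| ^ m * |(ZD^[m] f) (Hmul x (0, 0, s * r)) - (ZD^[m] f) x|
      ≤ (√|r| ^ 2) ^ m * (2 * √|r| ^ n * M) := by
        rw [Real.sq_sqrt (abs_nonneg r)]
        refine mul_le_mul_of_nonneg_left (increment.trans ?_) (by positivity)
        exact mul_le_mul_of_nonneg_right (by gcongr 2 * ?_ ^ n) hM₀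
    _ = 2 * √|r| ^ (n + 2 * m) * M := by ring

theorem abs_Hmul_central_sub_sum_le {m n : ℕ} (hn : n = 1 ∨ n = 2) {f : H3 → ℝ}
    (hf : ContDiff ℝ (m + 1 : ℕ) f) {x : H3} {M : ℝ} (r : ℝ)
    (hM : DerivBoundOn (n + 2 * m) f x (2 * √|r|) M) :
    |f (Hmul x (0, 0, r)) -
      ∑ j ∈ Finset.range (m + 1), r ^ j / (j.factorial : ℝ) * (ZD^[j] f) x| ≤
      2 * √|r| ^ (n + 2 * m) * M := by
  have taylor := norm_one_sub_taylor_sum_le m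
    (fun j s => r ^ j * (ZD^[j] f) (Hmul x (s • (0, 0, r)))) (r ^ m * (ZD^[m] f) x)
    (fun j hj s _ => hasDerivAt_pow_mul_iterate_ZD
      (hf.of_le (by exact_mod_cast (by omega : j + 1 ≤ m + 1))) x r s)
    (fun s hs => abs_pow_mul_iterate_ZD_sub_le hn hf r hM hs)
  have coefficient (j : ℕ) : 1 / (j.factorial : ℝ) * (r ^ j * (ZD^[j] f) x) =
      r ^ j / (j.factorial : ℝ) * (ZD^[j] f) x := by ring
  simpa only [Finset.sum_range_succ, ← sub_sub, one_smul, zero_smul, Hmul_zero, pow_zero, one_mul,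
    Function.iterate_zero, id_eq, smul_eq_mul, coefficient, Real.norm_eq_abs] using taylor

/-! ### The Taylor polynomial -/

/-- The left Taylor polynomial of `f` at `x` of homogeneous degree at most `k`, i.e.
`∑ rʲ (pX + qY)ⁱ Zʲ f (x) / (i! j!)` over `i + 2j ≤ k`. -/
def taylorPoly (k : ℕ) (f : H3 → ℝ) (x : H3) : MvPolynomial (Fin 3) ℝ :=
  ∑ j ∈ Finset.range (k / 2 + 1), MvPolynomial.C (1 / (j.factorial : ℝ)) * MvPolynomial.X 2 ^ j *
    horizontalTaylor (k + 1 - 2 * j) (ZD^[j] f) x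

theorem evalP_taylorPoly (k : ℕ) (f : H3 → ℝ) (x y : H3) :
    evalP (taylorPoly k f x) y = ∑ j ∈ Finset.range (k / 2 + 1), y.2.2 ^ j / (j.factorial : ℝ) *
      evalP (horizontalTaylor (k + 1 - 2 * j) (ZD^[j] f) x) y := by
  simp [evalP, taylorPoly, coords, div_eq_inv_mul]

theorem weightedTotalDegree_sum_le {R σ ι N : Type*} [CommSemiring R] [AddCommMonoid N]
    [SemilatticeSup N] [OrderBot N] {w : σ → N} {d : N} {s : Finset ι}
    {φ : ι → MvPolynomial σ R} (hφ : ∀ i ∈ s, (φ i).weightedTotalDegree w ≤ d) :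
    (∑ i ∈ s, φ i).weightedTotalDegree w ≤ d := by
  classical
  refine Finset.sup_le fun e he => ?_
  obtain ⟨i, hi, he⟩ := Finset.mem_biUnion.1 (MvPolynomial.support_sum he)
  exact (MvPolynomial.le_weightedTotalDegree w he).trans (hφ i hi)

theorem hdeg_taylorPoly_le (k : ℕ) (f : H3 → ℝ) (x : H3) : hdeg (taylorPoly k f x) ≤ k := by
  simp only [taylorPoly, horizontalTaylor, Finset.mul_sum]
  refine weightedTotalDegree_sum_le fun j hj => weightedTotalDegree_sum_le fun i hi => ?_
  have homogeneous :=
    (((MvPolynomial.isWeightedHomogeneous_X ℝ wH 2).pow j).C_mul (1 / (j.factorial : ℝ))).mul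
      ((isWeightedHomogeneous_horizontalForm i (ZD^[j] f) x).C_mul (1 / (i.factorial : ℝ)))
  have degree_le : j • wH 2 + i ≤ k := by
    simp only [Finset.mem_range, wH, Matrix.cons_val, smul_eq_mul] at *
    omega
  exact Finset.sup_le fun e he =>
    (homogeneous (MvPolynomial.mem_support_iff.1 he)).trans_le degree_le

theorem abs_taylorPoly_term_sub_le {k j : ℕ} (hj : 2 * j ≤ k) {f : H3 → ℝ}
    (hf : ContDiff ℝ (k + 1 : ℕ) f) {x : H3} {M : ℝ} (y : H3)
    (hM : DerivBoundOn (k + 1) f x (Hnorm y) M) :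
    |y.2.2 ^ j / (j.factorial : ℝ) * (ZD^[j] f) (Hmul x (y.1, y.2.1, 0)) -
      y.2.2 ^ j / (j.factorial : ℝ) * evalP (horizontalTaylor (k + 1 - 2 * j) (ZD^[j] f) x) y| ≤
      (2 * Hnorm y) ^ (k + 1) * M := by
  have hk : k + 1 - 2 * j + 2 * j = k + 1 := by omega
  have hN := Hnorm_nonneg y
  have hM₀ : 0 ≤ M := hM.nonneg hN
  have horizontal := abs_sub_evalP_horizontalTaylor_le
    (contDiff_iterate_ZD (hf.of_le (by exact_mod_cast (by omega : k + 1 - 2 * j + j ≤ k + 1))))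
    y (Hnorm_horizontal_le y) (hk.symm ▸ hM).iterate_ZD
  have coefficient : |y.2.2 ^ j / (j.factorial : ℝ)| ≤ (2 * Hnorm y) ^ (2 * j) := by
    rw [abs_div, abs_pow, Nat.abs_cast, pow_mul]
    refine (div_le_self (by positivity) (by exact_mod_cast j.factorial_pos)).trans ?_
    gcongr
    nlinarith [abs_snd_snd_le_Hnorm_sq y]
  rw [← mul_sub, abs_mul]
  calc _ ≤ (2 * Hnorm y) ^ (2 * j) * ((|y.1| + |y.2.1|) ^ (k + 1 - 2 * j) * M) := by gcongr
    _ ≤ (2 * Hnorm y) ^ (2 * j) * ((2 * Hnorm y) ^ (k + 1 - 2 * j) * M) := by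
        gcongr
        linarith [abs_fst_le_Hnorm y, abs_snd_fst_le_Hnorm y]
    _ = (2 * Hnorm y) ^ (k + 1) * M := by rw [← mul_assoc, ← pow_add, add_comm (2 * j), hk]

theorem abs_sub_evalP_taylorPoly_le {k : ℕ} {f : H3 → ℝ} (hf : ContDiff ℝ (k + 1 : ℕ) f) {x : H3}
    {M : ℝ} (y : H3) (hM : DerivBoundOn (k + 1) f x (3 * Hnorm y) M) :
    |f (Hmul x y) - evalP (taylorPoly k f x) y| ≤
      (2 + (k / 2 + 1 : ℕ) * 2 ^ (k + 1)) * Hnorm y ^ (k + 1) * M := by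
  have hN := Hnorm_nonneg y
  have hM₀ : 0 ≤ M := hM.nonneg (by positivity)
  have factor : Hmul x y = Hmul (Hmul x (y.1, y.2.1, 0)) (0, 0, y.2.2) := by
    ext <;> simp only [Hmul] <;> ring
  set S := ∑ j ∈ Finset.range (k / 2 + 1),
    y.2.2 ^ j / (j.factorial : ℝ) * (ZD^[j] f) (Hmul x (y.1, y.2.1, 0))
  have vertical : |f (Hmul x y) - S| ≤ 2 * Hnorm y ^ (k + 1) * M := by
    have hk : k + 1 - 2 * (k / 2) + 2 * (k / 2) = k + 1 := by omega
    have hr := sqrt_abs_snd_snd_le_Hnorm y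
    have hM' : DerivBoundOn (k + 1) f (Hmul x (y.1, y.2.1, 0)) (2 * √|y.2.2|) M :=
      (hM.mono (by linarith [Hnorm_horizontal_le y])).recenter
    have taylor := abs_Hmul_central_sub_sum_le (m := k / 2) (by omega)
      (hf.of_le (by exact_mod_cast (by omega : k / 2 + 1 ≤ k + 1))) y.2.2 (hk.symm ▸ hM')
    rw [hk] at taylor
    rw [factor]
    exact taylor.trans (by gcongr)
  have horizontal : |S - evalP (taylorPoly k f x) y| ≤
      (k / 2 + 1 : ℕ) * ((2 * Hnorm y) ^ (k + 1) * M) := by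
    rw [evalP_taylorPoly, ← Finset.sum_sub_distrib, ← nsmul_eq_mul]
    refine (Finset.abs_sum_le_sum_abs _ _).trans
      ((Finset.sum_le_card_nsmul _ _ _ fun j hj => ?_).trans_eq (by rw [Finset.card_range]))
    exact abs_taylorPoly_term_sub_le (by rw [Finset.mem_range] at hj; omega) hf y
      (hM.mono (by linarith))
  calc _ ≤ _ := abs_sub_le _ S _
    _ ≤ _ := add_le_add vertical horizontal
    _ = _ := by ring

/-- Stratified Taylor inequality: for every `k ∈ ℕ` there exist `C_k, γ₂ > 0`
such that every `C^{k+1}` function `f` admits at every point `x₀` a polynomial `P` of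
homogeneous degree at most `k` with
`|f(x₀∗y) − P(y)| ≤ C_k‖y‖^{k+1} · sup{|∇^α f(x₀∗z)| : |α| = k+1, ‖z‖ ≤ γ₂^{k+1}‖y‖}`. -/
theorem heisenberg_taylor_inequality (k : ℕ) :
    ∃ C : ℝ, 0 < C ∧ ∃ γ₂ : ℝ, 0 < γ₂ ∧
      ∀ f : H3 → ℝ, ContDiff ℝ (k + 1) f → ∀ x₀ : H3,
        ∃ P : MvPolynomial (Fin 3) ℝ, hdeg P ≤ k ∧
          ∀ y : H3, |f (Hmul x₀ y) - evalP P y| ≤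
            C * Hnorm y ^ (k + 1) *
              sSup {v : ℝ | ∃ (α : List (Fin 3)) (z : H3),
                wordWeight α = k + 1 ∧ Hnorm z ≤ γ₂ ^ (k + 1) * Hnorm y ∧
                v = |wordDeriv α f (Hmul x₀ z)|} := by
  refine ⟨2 + (k / 2 + 1 : ℕ) * 2 ^ (k + 1), by positivity, 3, by norm_num, fun f hf x₀ => ?_⟩
  refine ⟨taylorPoly k f x₀, hdeg_taylorPoly_le k f x₀, fun y => ?_⟩
  have hf' : ContDiff ℝ (k + 1 : ℕ) f := by exact_mod_cast hf
  refine abs_sub_evalP_taylorPoly_le hf' y ((derivBoundOn_sSup hf' x₀ _).mono ?_)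
  gcongr
  exacts [Hnorm_nonneg y, le_self_pow₀ (by norm_num) k.succ_ne_zero]
end
end
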